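/- arXiv:2512.13203 — 5 statements merged into one kernel-verified Lean document; each statement's English description precedes it below -/
import Mathlib

section
/- Let R be a commutative ring, J : Matrix (Fin r) (Fin n) R, and let M = (Fin r → R) ⧸ LinearMap.range (Matrix.mulVecLin J) be the cokernel of the map R^n → R^r given by J. For every prime ideal P of R, the localization of M at P is trivial (a subsingleton) if and only if there exists an injection g : Fin r ↪ Fin n such that the r×r minor det(J.submatrix id g) does not belong to P. Consequently, the support of the first-order deformation module T¹ = coker(J_f) of a complete intersection is exactly the vanishing locus of the ideal of r×r minors of the Jacobian, i.e., the singular locus. -/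
/-!
Let `J` have `r` rows, let `I` be its ideal of maximal minors, and let `M = coker J`. A scalar `a`
annihilates `M` iff `J * V = a • 1` for some matrix `V`. Cramer's rule provides such a `V` when `a`
is a maximal minor, so `I ≤ Ann M`. Conversely, taking determinants and expanding `det (J * V)`
over the columns of `J` shows `a ^ r ∈ I`. Hence `I` and `Ann M` have the same radical, and since
`M` is finitely generated, its support is `V(Ann M) = V(I)`.
-/

section MaximalMinors

variable {R m n : Type*} [CommRing R] [DecidableEq m]

theorem mem_annihilator_coker_iff [Finite m] [Fintype n] {J : Matrix m n R} {a : R} :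
    a ∈ Module.annihilator R ((m → R) ⧸ LinearMap.range J.mulVecLin) ↔
      ∃ V : Matrix n m R, J * V = a • 1 := by
  have smul_mem : a ∈ Module.annihilator R ((m → R) ⧸ LinearMap.range J.mulVecLin) ↔
      ∀ x : m → R, ∃ v : n → R, J.mulVec v = a • x := by
    simp only [Submodule.annihilator_quotient, Submodule.mem_colon, Set.mem_univ, true_imp_iff,
      LinearMap.mem_range, Matrix.mulVecLin_apply]
  rw [smul_mem]
  constructor
  · intro h
    choose v hv using fun j : m => h (Pi.single j (1 : R))
    refine ⟨(Matrix.of v).transpose, Matrix.ext fun i j => ?_⟩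
    calc (J * (Matrix.of v).transpose) i j = (a • (Pi.single j 1 : m → R)) i :=
          congrFun (hv j) i
      _ = (a • (1 : Matrix m m R)) i j := by
          simp only [Pi.smul_apply, Matrix.smul_apply, Pi.single_apply, Matrix.one_apply]
  · rintro ⟨V, hV⟩ x
    have := Fintype.ofFinite m
    exact ⟨V.mulVec x, by rw [Matrix.mulVec_mulVec, hV, Matrix.smul_mulVec, Matrix.one_mulVec]⟩

variable [Fintype m]

/-- The ideal generated by the maximal minors of a matrix with rows indexed by `m`: the
determinants of its square submatrices on all rows. A minor is indexed by an injection `m ↪ n`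
rather than by a set of columns; reordering the columns only changes its sign. -/
def maximalMinorsIdeal (J : Matrix m n R) : Ideal R :=
  Ideal.span (Set.range fun g : m ↪ n => (J.submatrix id g).det)

theorem maximalMinorsIdeal_le_iff {J : Matrix m n R} {I : Ideal R} :
    maximalMinorsIdeal J ≤ I ↔ ∀ g : m ↪ n, (J.submatrix id g).det ∈ I := by
  simp only [maximalMinorsIdeal, Ideal.span_le, Set.range_subset_iff, SetLike.mem_coe]

theorem det_submatrix_mem_maximalMinorsIdeal (J : Matrix m n R) (f : m → n) :
    (J.submatrix id f).det ∈ maximalMinorsIdeal J := by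
  by_cases hf : Function.Injective f
  · exact Ideal.subset_span ⟨⟨f, hf⟩, rfl⟩
  · obtain ⟨i, j, hij, hne⟩ := Function.not_injective_iff.mp hf
    have hdet : (J.submatrix id f).det = 0 :=
      Matrix.det_zero_of_column_eq hne fun k => by simp only [Matrix.submatrix_apply, hij]
    exact hdet ▸ zero_mem _

variable [Fintype n]

/-- Unordered form of the Cauchy–Binet expansion: the sum runs over all functions, including
the non-injective ones, whose terms vanish. -/
theorem det_mul_eq_sum_submatrix (J : Matrix m n R) (V : Matrix n m R) :
    (J * V).det = ∑ f : m → n, (∏ i, V (f i) i) * (J.submatrix id f).det := by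
  have columns : (J * V).transpose = fun i => ∑ k, V k i • J.transpose k := by
    ext i j
    simp [Matrix.mul_apply, mul_comm]
  calc (J * V).det
      = Matrix.detRowAlternating.toMultilinearMap fun i => ∑ k, V k i • J.transpose k := by
        rw [← Matrix.det_transpose, columns]
        rfl
    _ = ∑ f : m → n, (∏ i, V (f i) i) * (J.submatrix id f).transpose.det := by
        simp only [MultilinearMap.map_sum, MultilinearMap.map_smul_univ, smul_eq_mul]
        rfl
    _ = ∑ f : m → n, (∏ i, V (f i) i) * (J.submatrix id f).det := by
        simp only [Matrix.det_transpose]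

theorem det_mul_mem_maximalMinorsIdeal (J : Matrix m n R) (V : Matrix n m R) :
    (J * V).det ∈ maximalMinorsIdeal J := by
  rw [det_mul_eq_sum_submatrix]
  exact Ideal.sum_mem _ fun f _ =>
    Ideal.mul_mem_left _ _ (det_submatrix_mem_maximalMinorsIdeal J f)

theorem maximalMinorsIdeal_le_annihilator_coker (J : Matrix m n R) :
    maximalMinorsIdeal J ≤ Module.annihilator R ((m → R) ⧸ LinearMap.range J.mulVecLin) := by
  classical
  refine maximalMinorsIdeal_le_iff.mpr fun g => mem_annihilator_coker_iff.mpr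
    ⟨(1 : Matrix n n R).submatrix id g * (J.submatrix id g).adjugate, ?_⟩
  have select_columns : J * (1 : Matrix n n R).submatrix id g = J.submatrix id g := by
    simpa only [Matrix.mul_one, Matrix.submatrix_id_id] using
      (Matrix.submatrix_mul J 1 id id g Function.bijective_id).symm
  rw [← Matrix.mul_assoc, select_columns, Matrix.mul_adjugate]

theorem pow_card_mem_maximalMinorsIdeal {J : Matrix m n R} {a : R}
    (ha : a ∈ Module.annihilator R ((m → R) ⧸ LinearMap.range J.mulVecLin)) :
    a ^ Fintype.card m ∈ maximalMinorsIdeal J := by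
  obtain ⟨V, hV⟩ := mem_annihilator_coker_iff.mp ha
  have hdet : (J * V).det = a ^ Fintype.card m := by
    rw [hV, Matrix.det_smul, Matrix.det_one, mul_one]
  exact hdet ▸ det_mul_mem_maximalMinorsIdeal J V

theorem radical_annihilator_coker (J : Matrix m n R) :
    (Module.annihilator R ((m → R) ⧸ LinearMap.range J.mulVecLin)).radical =
      (maximalMinorsIdeal J).radical :=
  le_antisymm
    (Ideal.radical_le_radical_iff.mpr fun _ ha => ⟨_, pow_card_mem_maximalMinorsIdeal ha⟩)
    (Ideal.radical_mono (maximalMinorsIdeal_le_annihilator_coker J))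

theorem support_coker_eq_zeroLocus (J : Matrix m n R) :
    Module.support R ((m → R) ⧸ LinearMap.range J.mulVecLin) =
      PrimeSpectrum.zeroLocus (maximalMinorsIdeal J) := by
  rw [Module.support_eq_zeroLocus, PrimeSpectrum.zeroLocus_eq_iff, radical_annihilator_coker]

theorem coker_localization_subsingleton_iff_minor_not_mem_general (J : Matrix m n R)
    (P : Ideal R) [hP : P.IsPrime] :
    Subsingleton (LocalizedModule P.primeCompl ((m → R) ⧸ LinearMap.range J.mulVecLin)) ↔
      ∃ g : m ↪ n, (J.submatrix id g).det ∉ P := by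
  rw [← Module.notMem_support_iff (p := ⟨P, hP⟩), support_coker_eq_zeroLocus,
    PrimeSpectrum.mem_zeroLocus, SetLike.coe_subset_coe, maximalMinorsIdeal_le_iff, not_forall]

end MaximalMinors

/-- Let `J` be an `r × n` matrix over a commutative ring `R` and let
`M = R^r / J·R^n` be the cokernel of the map `R^n → R^r` given by `J`
(the first-order deformation module `T¹` of the complete intersection presented by `J`).
For every prime ideal `P` of `R`, the localization of `M` at `P` is trivial if and only
if some `r × r` minor of `J` does not lie in `P`.  Hence the support of `T¹` is exactly
the vanishing locus of the ideal of `r × r` minors of the Jacobian, i.e. the singular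
locus. -/
theorem coker_localization_subsingleton_iff_minor_not_mem
    {R : Type*} [CommRing R] {r n : ℕ} (J : Matrix (Fin r) (Fin n) R)
    (P : Ideal R) [P.IsPrime] :
    Subsingleton (LocalizedModule P.primeCompl
        ((Fin r → R) ⧸ LinearMap.range (Matrix.mulVecLin J))) ↔
      ∃ g : Fin r ↪ Fin n, (J.submatrix id ⇑g).det ∉ P :=
  coker_localization_subsingleton_iff_minor_not_mem_general J P
end

section
/- Let S = MvPolynomial (Fin n) ℂ, f : Fin r → S, I = Ideal.span (Set.range f), and A = S ⧸ I. The A-linear map from the module of ℂ-derivations Derivation ℂ A A to A^n sending a derivation D to the tuple (D(x̄ 0), …, D(x̄ (n−1))) is injective, and its range equals the kernel of the A-linear map A^n → A^r, v ↦ J̄·v, given by matrix-vector multiplication with the reduced Jacobian J̄. Hence Hom_A(Ω¹_{A/ℂ}, A) ≅ Der_ℂ(A) is identified with the module of ambient vector fields tangent to all the hypersurfaces f_i = 0. -/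
/-!
Let `A = S/I` be the quotient of a polynomial ring by the ideal generated by the `f i`, and let `M`
be an `A`-module. A derivation `A → M` is the same thing as a derivation `S → M` that vanishes on
`I`. Since `I` annihilates `M`, the Leibniz rule makes the restriction of any derivation `S → M` to
`I` linear over `S`, so that vanishing on `I` only has to be checked on the generators `f i`. On the
other hand, the derivations `S → M` are exactly the maps `p ↦ ∑ j, ∂p/∂xⱼ • v j` for arbitrary
tuples `v` in `M`, and for these the vanishing on the `f i` reads `J̄ v = 0`.
-/

open MvPolynomial

/-- The quotient algebra `A = S/I` where `S = ℂ[x₁,…,xₙ]` and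
`I = (f 0, …, f (r-1))`. -/
abbrev CIRing (n r : ℕ) (f : Fin r → MvPolynomial (Fin n) ℂ) : Type :=
  MvPolynomial (Fin n) ℂ ⧸ Ideal.span (Set.range f)

/-- The reduced Jacobian matrix `J̄`, whose `(i, j)` entry is the class of
`∂f_i/∂x_j` in `A = S/I`. -/
noncomputable def redJacobian (n r : ℕ) (f : Fin r → MvPolynomial (Fin n) ℂ) :
    Matrix (Fin r) (Fin n) (CIRing n r f) :=
  Matrix.of fun i j => Ideal.Quotient.mk (Ideal.span (Set.range f)) (pderiv j (f i))

section Derivation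

theorem ker_algebraMap_le_annihilator (A B M : Type*) [CommSemiring A] [Semiring B] [Algebra A B]
    [AddCommMonoid M] [Module A M] [Module B M] [IsScalarTower A B M] :
    RingHom.ker (algebraMap A B) ≤ Module.annihilator A M := fun a ha =>
  Module.mem_annihilator.mpr fun m => by
    rw [← algebraMap_smul B a m, RingHom.mem_ker.mp ha, zero_smul]

theorem derivation_eq_zero_of_mem_span {R A M : Type*} [CommSemiring R] [CommSemiring A]
    [Algebra R A] [AddCommMonoid M] [Module R M] [Module A M] (d : Derivation R A M) {s : Set A}
    (hs : s ⊆ Module.annihilator A M) (hd : ∀ a ∈ s, d a = 0) {a : A} (ha : a ∈ Ideal.span s) :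
    d a = 0 := by
  induction ha using Submodule.span_induction with
  | mem a ha => exact hd a ha
  | zero => exact map_zero d
  | add a b _ _ hda hdb => rw [map_add, hda, hdb, add_zero]
  | smul c a ha hda =>
    have ha_smul : a • d c = 0 := Module.mem_annihilator.mp (Ideal.span_le.mpr hs ha) (d c)
    rw [smul_eq_mul, d.leibniz, hda, smul_zero, zero_add, ha_smul]

theorem exists_derivation_compAlgebraMap_eq {R A B M : Type*} [CommRing R] [CommRing A]
    [CommRing B] [Algebra R A] [Algebra R B] [Algebra A B] [IsScalarTower R A B] [AddCommGroup M]
    [Module R M] [Module A M] [Module B M] [IsScalarTower A B M]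
    (hB : Function.Surjective (algebraMap A B)) (d : Derivation R A M)
    (hd : ∀ a ∈ RingHom.ker (algebraMap A B), d a = 0) :
    ∃ D : Derivation R B M, D.compAlgebraMap A = d := by
  let π : A →ₗ[R] B := (IsScalarTower.toAlgHom R A B).toLinearMap
  let D : B →ₗ[R] M :=
    π.ker.liftQ d.toLinearMap hd ∘ₗ (π.quotKerEquivOfSurjective hB).symm.toLinearMap
  have hD (a : A) : D (algebraMap A B a) = d a :=
    congrArg (π.ker.liftQ d.toLinearMap hd) (π.quotKerEquivOfSurjective_symm_apply hB a)
  refine ⟨.mk' D fun b c => ?_, Derivation.ext hD⟩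
  obtain ⟨a, rfl⟩ := hB b
  obtain ⟨a', rfl⟩ := hB c
  simp only [← map_mul, hD, d.leibniz, algebraMap_smul]

variable {R B M σ : Type*} [CommSemiring R] [CommSemiring B] [Algebra R B] [AddCommMonoid M]
  [Module R M] [Module B M] [SMulCommClass R B M]

variable (R M) in
/-- Evaluation of derivations `B → M` at a family `x` of elements of `B`. When `x` is the family of
coordinate functions, this gives the components of a derivation regarded as a vector field. -/
def derivationValues (x : σ → B) : Derivation R B M →ₗ[B] (σ → M) where
  toFun D j := D (x j)
  map_add' _ _ := rfl
  map_smul' _ _ := rfl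

theorem derivationValues_injective {x : σ → B} (hx : Algebra.adjoin R (Set.range x) = ⊤) :
    Function.Injective (derivationValues R M x) := fun _ _ h =>
  Derivation.ext_of_adjoin_eq_top _ hx (Set.forall_mem_range.mpr (congrFun h))

end Derivation

section MvPolynomial

theorem mkDerivation_eq_sum_pderiv_smul {R σ M : Type*} [CommSemiring R] [Fintype σ]
    [AddCommMonoid M] [Module R M] [Module (MvPolynomial σ R) M]
    [IsScalarTower R (MvPolynomial σ R) M] (v : σ → M) (p : MvPolynomial σ R) :
    mkDerivation R v p = ∑ j, pderiv j p • v j := by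
  classical
  induction p using MvPolynomial.induction_on with
  | C a => simp
  | add p q hp hq => simp only [map_add, add_smul, Finset.sum_add_distrib, hp, hq]
  | mul_X p i hp =>
    simp [hp, add_smul, mul_smul, Finset.sum_add_distrib, Finset.smul_sum, pderiv_X,
      Pi.single_apply]

section TangentFields

variable {R σ ι : Type*} [CommSemiring R] (B M : Type*) [CommSemiring B]
  [Algebra (MvPolynomial σ R) B] [AddCommMonoid M] [Module R M] [Module (MvPolynomial σ R) M]
  [Module B M] [IsScalarTower R (MvPolynomial σ R) M] [IsScalarTower (MvPolynomial σ R) B M]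
  [SMulCommClass R B M]

/-- The `B`-module of vector fields `∑ j, v j ∂/∂xⱼ` with coefficients in `M` that are tangent to
all the hypersurfaces `f i = 0`. The condition is phrased through `mkDerivation R v`, the
derivation `p ↦ ∑ j, ∂p/∂xⱼ • v j`, so that infinitely many variables are allowed. -/
def tangentFields (f : ι → MvPolynomial σ R) : Submodule B (σ → M) where
  carrier := {v | ∀ i, mkDerivation R v (f i) = 0}
  zero_mem' i := by
    have h : mkDerivation R (0 : σ → M) = 0 := derivation_ext fun j => by simp
    rw [h, Derivation.zero_apply]
  add_mem' {v w} hv hw i := by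
    have h : mkDerivation R (v + w) = mkDerivation R v + mkDerivation R w :=
      derivation_ext fun j => by simp
    rw [h, Derivation.add_apply, hv i, hw i, add_zero]
  smul_mem' b v hv i := by
    have h : mkDerivation R (b • v) = b • mkDerivation R v := derivation_ext fun j => by simp
    rw [h, Derivation.smul_apply, hv i, smul_zero]

variable {B M}

theorem mem_tangentFields {f : ι → MvPolynomial σ R} {v : σ → M} :
    v ∈ tangentFields B M f ↔ ∀ i, mkDerivation R v (f i) = 0 :=
  Iff.rfl

end TangentFields

theorem adjoin_range_mk_X {R σ : Type*} [CommRing R] (I : Ideal (MvPolynomial σ R)) :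
    Algebra.adjoin R (Set.range fun j => Ideal.Quotient.mk I (X j)) = ⊤ := by
  have h := congrArg (Subalgebra.map (Ideal.Quotient.mkₐ R I)) (adjoin_range_X (R := R) (σ := σ))
  rwa [AlgHom.map_adjoin, ← Set.range_comp, Algebra.map_top,
    (AlgHom.range_eq_top _).mpr (Ideal.Quotient.mkₐ_surjective R I)] at h

variable {R σ ι M : Type*} [CommRing R] [AddCommGroup M] [Module R M]
  [Module (MvPolynomial σ R) M] [IsScalarTower R (MvPolynomial σ R) M]

theorem mkDerivation_derivationValues {I : Ideal (MvPolynomial σ R)}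
    [Module (MvPolynomial σ R ⧸ I) M] [IsScalarTower R (MvPolynomial σ R ⧸ I) M]
    [IsScalarTower (MvPolynomial σ R) (MvPolynomial σ R ⧸ I) M]
    (D : Derivation R (MvPolynomial σ R ⧸ I) M) :
    mkDerivation R (derivationValues R M (fun j => Ideal.Quotient.mk I (X j)) D) =
      D.compAlgebraMap (MvPolynomial σ R) :=
  derivation_ext fun j => mkDerivation_X R _ j

variable (f : ι → MvPolynomial σ R) [Module (MvPolynomial σ R ⧸ Ideal.span (Set.range f)) M]
  [IsScalarTower R (MvPolynomial σ R ⧸ Ideal.span (Set.range f)) M]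
  [IsScalarTower (MvPolynomial σ R) (MvPolynomial σ R ⧸ Ideal.span (Set.range f)) M]

theorem range_derivationValues_mk_X :
    LinearMap.range
        (derivationValues R M fun j => Ideal.Quotient.mk (Ideal.span (Set.range f)) (X j)) =
      tangentFields (MvPolynomial σ R ⧸ Ideal.span (Set.range f)) M f := by
  have ker_eq : RingHom.ker (algebraMap (MvPolynomial σ R)
      (MvPolynomial σ R ⧸ Ideal.span (Set.range f))) = Ideal.span (Set.range f) :=
    Ideal.mk_ker
  ext v
  rw [LinearMap.mem_range, mem_tangentFields]
  constructor
  · rintro ⟨D, rfl⟩ i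
    have mk_f : Ideal.Quotient.mk (Ideal.span (Set.range f)) (f i) = 0 :=
      Ideal.Quotient.eq_zero_iff_mem.mpr (Ideal.subset_span ⟨i, rfl⟩)
    rw [mkDerivation_derivationValues]
    exact (congrArg D mk_f).trans D.map_zero
  · intro hv
    have range_le : Set.range f ⊆ Module.annihilator (MvPolynomial σ R) M :=
      Ideal.subset_span.trans (ker_eq.ge.trans (ker_algebraMap_le_annihilator _ _ M))
    obtain ⟨D, hD⟩ := exists_derivation_compAlgebraMap_eq Ideal.Quotient.mk_surjective
      (mkDerivation R v) fun p hp => derivation_eq_zero_of_mem_span _ range_le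
        (Set.forall_mem_range.mpr hv) (ker_eq.le hp)
    have hDX (j : σ) : D.compAlgebraMap (MvPolynomial σ R) (X j) = v j := by
      rw [hD, mkDerivation_X]
    exact ⟨D, funext hDX⟩

theorem derivations_eq_tangent_fields_general :
    ∃ Φ : Derivation R (MvPolynomial σ R ⧸ Ideal.span (Set.range f)) M
        →ₗ[MvPolynomial σ R ⧸ Ideal.span (Set.range f)] (σ → M),
      (∀ (D : Derivation R (MvPolynomial σ R ⧸ Ideal.span (Set.range f)) M) (j : σ),
          Φ D j = D (Ideal.Quotient.mk (Ideal.span (Set.range f)) (X j))) ∧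
      Function.Injective Φ ∧
      LinearMap.range Φ = tangentFields (MvPolynomial σ R ⧸ Ideal.span (Set.range f)) M f :=
  ⟨derivationValues R M fun j => Ideal.Quotient.mk _ (X j), fun _ _ => rfl,
    derivationValues_injective (adjoin_range_mk_X _), range_derivationValues_mk_X f⟩

end MvPolynomial

theorem redJacobian_mulVec_apply {n r : ℕ} {f : Fin r → MvPolynomial (Fin n) ℂ}
    (v : Fin n → CIRing n r f) (i : Fin r) :
    (redJacobian n r f).mulVec v i = mkDerivation ℂ v (f i) :=
  (mkDerivation_eq_sum_pderiv_smul v (f i)).symm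

theorem ker_mulVecLin_redJacobian (n r : ℕ) (f : Fin r → MvPolynomial (Fin n) ℂ) :
    LinearMap.ker (Matrix.mulVecLin (redJacobian n r f)) =
      tangentFields (CIRing n r f) (CIRing n r f) f := by
  ext v
  simp only [LinearMap.mem_ker, Matrix.mulVecLin_apply, funext_iff, redJacobian_mulVec_apply,
    Pi.zero_apply, mem_tangentFields]

/-- The `A`-linear map `Der_ℂ(A) → A^n`, `D ↦ (D(x̄ 0), …, D(x̄ (n-1)))`,
is injective and its range is exactly the kernel of the map `A^n → A^r` given by the
reduced Jacobian matrix: derivations of `A` correspond to ambient vector fields tangent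
to all the hypersurfaces `f_i = 0`. -/
theorem derivations_eq_tangent_fields
    (n r : ℕ) (f : Fin r → MvPolynomial (Fin n) ℂ) :
    ∃ Φ : Derivation ℂ (CIRing n r f) (CIRing n r f) →ₗ[CIRing n r f]
        (Fin n → CIRing n r f),
      (∀ (D : Derivation ℂ (CIRing n r f) (CIRing n r f)) (j : Fin n),
          Φ D j = D (Ideal.Quotient.mk (Ideal.span (Set.range f)) (X j))) ∧
      Function.Injective Φ ∧
      LinearMap.range Φ = LinearMap.ker (Matrix.mulVecLin (redJacobian n r f)) := by
  rw [ker_mulVecLin_redJacobian]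
  exact derivations_eq_tangent_fields_general f
end

section
/- Let A = ℂ[x,y]/(xy), the coordinate ring of the ordinary node. Then the first Ext group Ext¹_A(Ω[A⁄ℂ], A), taken in the category of A-modules, is isomorphic as an abelian group to ℂ. In other words, the node xy = 0 has one-dimensional first-order deformation space T¹, corresponding to its one-parameter smoothing xy = t. -/
/-!
Let `A = P ⧸ (f)` with `P` a polynomial ring over `k`. The conormal sequence
`A → A ⊗ Ω[P⁄k] → Ω[A⁄k] → 0`, with `1 ↦ df`, is exact, and it is exact on the left as soon as no
nonzero element of `A` annihilates every partial derivative of `f`. It is then a projective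
resolution of `Ω[A⁄k]` of length one. Its transpose `Hom(A ⊗ Ω[P⁄k], A) = Der(P, A) → A` sends `δ`
to `δ f`, so `Ext¹(Ω[A⁄k], A)` is the Tjurina algebra, the quotient of `A` by the partial
derivatives of `f`. For `f = xy` these are `y` and `x`, nothing nonzero in `A` is killed by both,
and `A ⧸ (x, y) = k`.
-/

open MvPolynomial CategoryTheory

/-- The coordinate ring `A = ℂ[x,y]/(xy)` of the ordinary node. -/
abbrev NodeRing : Type :=
  MvPolynomial (Fin 2) ℂ ⧸ Ideal.span {(X 0 * X 1 : MvPolynomial (Fin 2) ℂ)}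

universe u

section Resolution

open Limits HomologicalComplex

variable {C : Type*} [Category* C] [Abelian C]

lemma d_comp_toSingle₀_f_zero {K : ChainComplex C ℕ} {M : C}
    (π : K ⟶ (ChainComplex.single₀ C).obj M) : K.d 1 0 ≫ π.f 0 = 0 := by
  rw [← π.comm 1 0, single_obj_d, comp_zero]

lemma quasiIso_toSingle₀_of_exact {K : ChainComplex C ℕ} {M : C}
    (π : K ⟶ (ChainComplex.single₀ C).obj M) (hK : ∀ n, K.ExactAt (n + 1))
    (hπ : (ShortComplex.mk _ _ (d_comp_toSingle₀_f_zero π)).Exact) (hepi : Epi (π.f 0)) :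
    QuasiIso π where
  quasiIsoAt
    | 0 => by
      rw [ChainComplex.quasiIsoAt₀_iff,
        ShortComplex.quasiIso_iff_of_zeros' _ (K.shape _ _ (by simp)) rfl rfl]
      exact ⟨hπ, hepi⟩
    | n + 1 => by
      rw [quasiIsoAt_iff_exactAt' _ _ (ChainComplex.exactAt_succ_single_obj M n)]
      exact hK n

/-- The chain complex `⋯ → 0 → X → Y` of a morphism `f : X ⟶ Y`, with `Y` in degree `0`. -/
noncomputable def twoTermComplex {X Y : C} (f : X ⟶ Y) : ChainComplex C ℕ :=
  double f (show (ComplexShape.down ℕ).Rel 1 0 from rfl)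

section TwoTermComplex

variable {X Y : C} (f : X ⟶ Y)

/-- Identifies the degree one term, hiding the transports in `HomologicalComplex.double`. -/
noncomputable def twoTermComplexXOne : (twoTermComplex f).X 1 ≅ X := doubleXIso₀ f _

/-- Identifies the degree zero term, hiding the transports in `HomologicalComplex.double`. -/
noncomputable def twoTermComplexXZero : (twoTermComplex f).X 0 ≅ Y :=
  doubleXIso₁ f _ one_ne_zero

lemma twoTermComplex_d :
    (twoTermComplex f).d 1 0 = (twoTermComplexXOne f).hom ≫ f ≫ (twoTermComplexXZero f).inv :=
  double_d f _ one_ne_zero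

lemma isZero_twoTermComplex_X (n : ℕ) : IsZero ((twoTermComplex f).X (n + 2)) :=
  isZero_double_X f _ _ (by simp) (by simp)

lemma twoTermComplex_exactAt_succ [Mono f] (n : ℕ) : (twoTermComplex f).ExactAt (n + 1) := by
  cases n with
  | zero =>
    rw [exactAt_iff' _ 2 1 0 (by simp) (by simp),
      ShortComplex.exact_iff_mono _ ((isZero_twoTermComplex_X f 0).eq_of_src _ _)]
    change Mono ((twoTermComplex f).d 1 0)
    rw [twoTermComplex_d]
    infer_instance
  | succ n => exact ShortComplex.exact_of_isZero_X₂ _ (isZero_twoTermComplex_X f n)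

end TwoTermComplex

/-- The augmentation of the two-term complex of `S.f` given by `S.g`. -/
noncomputable def twoTermAugmentation (S : ShortComplex C) :
    twoTermComplex S.f ⟶ (ChainComplex.single₀ C).obj S.X₃ :=
  (ChainComplex.toSingle₀Equiv _ _).symm
    ⟨(twoTermComplexXZero S.f).hom ≫ S.g, by simp [twoTermComplex_d]⟩

lemma twoTermAugmentation_f_zero (S : ShortComplex C) :
    (twoTermAugmentation S).f 0 = (twoTermComplexXZero S.f).hom ≫ S.g :=
  ChainComplex.toSingle₀Equiv_symm_apply_f_zero _ _

/-- A short exact sequence `0 → X₁ → X₂ → X₃ → 0` with `X₁` and `X₂` projective, as a projective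
resolution of `X₃`. -/
noncomputable def twoTermResolution {S : ShortComplex C} (hS : S.ShortExact)
    [Projective S.X₁] [Projective S.X₂] : ProjectiveResolution S.X₃ where
  complex := twoTermComplex S.f
  projective
    | 0 => Projective.of_iso (twoTermComplexXZero S.f).symm ‹_›
    | 1 => Projective.of_iso (twoTermComplexXOne S.f).symm ‹_›
    | n + 2 => (isZero_twoTermComplex_X S.f n).projective
  π := twoTermAugmentation S
  quasiIso := by
    have := hS.mono_f
    have := hS.epi_g
    refine quasiIso_toSingle₀_of_exact _ (twoTermComplex_exactAt_succ S.f)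
      (ShortComplex.exact_of_iso (ShortComplex.isoMk (S₁ := S) (S₂ := .mk _ _ _)
        (twoTermComplexXOne S.f).symm (twoTermComplexXZero S.f).symm (Iso.refl _) ?_ ?_)
        hS.exact) ?_
    · simp [twoTermComplex_d]
    · dsimp
      rw [twoTermAugmentation_f_zero]
      simp
    · rw [twoTermAugmentation_f_zero]
      exact epi_comp _ S.g

end Resolution

section Ext

variable {R : Type*} [Ring R]

/-- The homology of a short complex of modules whose second map vanishes is the cokernel of the
first map. -/
noncomputable def homologyEquivOfGEqZero (S : ShortComplex (ModuleCat R)) (hg : S.g = 0) :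
    S.homology ≃ₗ[R] S.X₂ ⧸ S.f.hom.range :=
  (ShortComplex.LeftHomologyData.ofIsColimitCokernelCofork S hg _
    (ModuleCat.cokernelIsColimit S.f)).homologyIso.toLinearEquiv

variable {C : Type*} [Category* C] [Abelian C] [Linear R C]

lemma map_homCongr_range_leftComp {X X' Y Y' : C} {f : X ⟶ Y} {f' : X' ⟶ Y'} (i : X ≅ X')
    (j : Y ≅ Y') (h : f ≫ j.hom = i.hom ≫ f') (Z : C) :
    (Linear.leftComp R Z f).range.map (Linear.homCongr R i (Iso.refl Z)).toLinearMap =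
      (Linear.leftComp R Z f').range := by
  have hinv : i.inv ≫ f = f' ≫ j.inv := by
    rw [Iso.inv_comp_eq, ← Category.assoc, ← h, Category.assoc, j.hom_inv_id, Category.comp_id]
  have hcomm : (Linear.homCongr R i (Iso.refl Z)).toLinearMap ∘ₗ Linear.leftComp R Z f =
      Linear.leftComp R Z f' ∘ₗ (Linear.homCongr R j (Iso.refl Z)).toLinearMap := by
    ext g
    simp [Linear.homCongr_apply, reassoc_of% hinv]
  rw [← LinearMap.range_comp, hcomm, LinearEquiv.range_comp]

variable [EnoughProjectives C]

/-- For a short exact sequence `0 → X₁ → X₂ → X₃ → 0` with `X₁` and `X₂` projective, the first Ext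
of `X₃` is the cokernel of `Hom(X₂, Y) → Hom(X₁, Y)`. -/
noncomputable def extOneEquivOfShortExact {S : ShortComplex C} (hS : S.ShortExact)
    [Projective S.X₁] [Projective S.X₂] (Y : C) :
    ((Ext R C 1).obj (.op S.X₃)).obj Y ≃ₗ[R] (S.X₁ ⟶ Y) ⧸ (Linear.leftComp R Y S.f).range :=
  let K := (twoTermComplex S.f).linearYonedaObj R Y
  have hg : (K.sc' 0 1 2).g = 0 := by
    ext x
    exact (isZero_twoTermComplex_X S.f 0).eq_of_src _ _
  ((twoTermResolution hS).isoExt 1 Y ≪≫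
    ShortComplex.homologyMapIso (K.isoSc' 0 1 2 (by simp) (by simp))).toLinearEquiv ≪≫ₗ
    homologyEquivOfGEqZero _ hg ≪≫ₗ
    Submodule.Quotient.equiv _ _ (Linear.homCongr R (twoTermComplexXOne S.f) (Iso.refl Y))
      (map_homCongr_range_leftComp (twoTermComplexXOne S.f) (twoTermComplexXZero S.f)
        (by simp [twoTermComplex_d]) Y)

end Ext

section ModuleCat

variable {A : Type u} [CommRing A] {L M : Type u} [AddCommGroup L] [AddCommGroup M] [Module A L]
  [Module A M]

lemma map_range_leftComp_toSpanSingleton (v : L) (N : Type u) [AddCommGroup N] [Module A N] :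
    (Linear.leftComp A (.of A N) (ModuleCat.ofHom (LinearMap.toSpanSingleton A L v))).range.map
        (ModuleCat.homLinearEquiv ≪≫ₗ LinearMap.ringLmapEquivSelf A A N).toLinearMap =
      (LinearMap.applyₗ v : (L →ₗ[A] N) →ₗ[A] N).range := by
  have hcomm : (ModuleCat.homLinearEquiv ≪≫ₗ LinearMap.ringLmapEquivSelf A A N).toLinearMap ∘ₗ
      Linear.leftComp A (.of A N) (ModuleCat.ofHom (LinearMap.toSpanSingleton A L v)) =
      LinearMap.applyₗ v ∘ₗ ModuleCat.homLinearEquiv.toLinearMap := by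
    ext φ
    exact congrArg φ.hom (one_smul A v)
  rw [← LinearMap.range_comp, hcomm, LinearEquiv.range_comp]

/-- For an exact sequence `0 → A → L → M → 0` of `A`-modules with `L` projective and `1 ↦ v` on the
left, `Ext¹(M, N)` is the quotient of `N` by the values at `v` of the linear maps `L → N`. -/
noncomputable def extOneEquivOfExactToSpanSingleton [Module.Projective A L] {v : L}
    {g : L →ₗ[A] M} (hinj : Function.Injective (LinearMap.toSpanSingleton A L v))
    (hexact : Function.Exact (LinearMap.toSpanSingleton A L v) g) (hsurj : Function.Surjective g)
    (N : Type u) [AddCommGroup N] [Module A N] :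
    ((Ext A (ModuleCat A) 1).obj (.op (.of A M))).obj (.of A N) ≃ₗ[A]
      N ⧸ (LinearMap.applyₗ v : (L →ₗ[A] N) →ₗ[A] N).range :=
  let S := ModuleCat.shortComplexOfCompEqZero (LinearMap.toSpanSingleton A L v) g
    hexact.linearMap_comp_eq_zero
  have hS : S.ShortExact := ModuleCat.shortComplex_shortExact S hexact hinj hsurj
  have : Projective S.X₁ := (IsProjective.iff_projective A).1 inferInstance
  have : Projective S.X₂ := (IsProjective.iff_projective L).1 ‹_›
  extOneEquivOfShortExact hS (.of A N) ≪≫ₗ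
    Submodule.Quotient.equiv _ _ (ModuleCat.homLinearEquiv ≪≫ₗ LinearMap.ringLmapEquivSelf A A N)
      (map_range_leftComp_toSpanSingleton v N)

end ModuleCat

section Hypersurface

open KaehlerDifferential TensorProduct

variable (k : Type*) {P : Type*} (A : Type*) [CommRing k] [CommRing P] [CommRing A] [Algebra k P]
  [Algebra P A] [Algebra k A] (f : P)

/-- The ideal of `A` formed by the values `δ f` of the `k`-linear derivations `δ : P → A`. When `P`
is a polynomial ring and `A = P ⧸ (f)`, it is generated by the partial derivatives of `f`, and its
quotient ring is the Tjurina algebra of the hypersurface `f = 0`. -/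
def tjurinaIdeal : Ideal A :=
  LinearMap.range (M := Derivation k P A)
    { toFun δ := δ f, map_add' _ _ := rfl, map_smul' _ _ := rfl : Derivation k P A →ₗ[A] A}

variable [IsScalarTower k P A]

lemma range_applyₗ_one_tmul_D :
    (LinearMap.applyₗ (1 ⊗ₜ D k P f) : (A ⊗[P] Ω[P⁄k] →ₗ[A] A) →ₗ[A] A).range =
      tjurinaIdeal k A f := by
  ext a
  constructor
  · rintro ⟨φ, rfl⟩
    exact ⟨((LinearMap.liftBaseChangeEquiv A).symm φ).compDer (D k P), rfl⟩
  · rintro ⟨δ, rfl⟩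
    exact ⟨δ.liftKaehlerDifferential.liftBaseChange A, by simp⟩

variable {k A f}

lemma injective_toSpanSingleton_one_tmul_D (hf : (tjurinaIdeal k A f).annihilator = ⊥) :
    Function.Injective (LinearMap.toSpanSingleton A (A ⊗[P] Ω[P⁄k]) (1 ⊗ₜ D k P f)) := by
  rw [injective_iff_map_eq_zero]
  intro a ha
  rw [← Submodule.mem_bot A, ← hf, Submodule.mem_annihilator, ← range_applyₗ_one_tmul_D]
  rintro _ ⟨φ, rfl⟩
  simpa using congrArg φ ha

lemma exact_toSpanSingleton_mapBaseChange (hsurj : Function.Surjective (algebraMap P A))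
    (hker : RingHom.ker (algebraMap P A) = Ideal.span {f}) :
    Function.Exact (LinearMap.toSpanSingleton A (A ⊗[P] Ω[P⁄k]) (1 ⊗ₜ D k P f))
      (mapBaseChange k P A) := by
  have hf : algebraMap P A f = 0 := by
    rw [← RingHom.mem_ker, hker]
    exact Ideal.mem_span_singleton_self f
  have hleibniz (p : P) : (1 : A) ⊗ₜ[P] D k P (p * f) = algebraMap P A p • 1 ⊗ₜ D k P f := by
    rw [Derivation.leibniz, tmul_add, ← smul_tmul f, Algebra.smul_def f, hf]
    simp
  intro t
  constructor
  · intro ht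
    obtain ⟨s, rfl⟩ := (exact_kerCotangentToTensor_mapBaseChange k P A hsurj t).1 ht
    obtain ⟨⟨g, hg⟩, rfl⟩ := Ideal.toCotangent_surjective _ s
    obtain ⟨p, rfl⟩ := Ideal.mem_span_singleton'.1 (hker ▸ hg)
    exact ⟨algebraMap P A p, (hleibniz p).symm⟩
  · rintro ⟨a, rfl⟩
    simp [hf]

end Hypersurface

/-- When no nonzero element of the hypersurface ring `A = P ⧸ (f)` annihilates all the `δ f`,
`Ext¹(Ω[A⁄k], A)` is the Tjurina algebra. -/
noncomputable def extOneKaehlerEquivQuotTjurinaIdeal {k : Type*} {P A : Type u} [CommRing k]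
    [CommRing P] [CommRing A] [Algebra k P] [Algebra P A] [Algebra k A] [IsScalarTower k P A]
    [Module.Projective P Ω[P⁄k]] {f : P} (hsurj : Function.Surjective (algebraMap P A))
    (hker : RingHom.ker (algebraMap P A) = Ideal.span {f})
    (hf : (tjurinaIdeal k A f).annihilator = ⊥) :
    ((Ext A (ModuleCat A) 1).obj (.op (.of A Ω[A⁄k]))).obj (.of A A) ≃ₗ[A]
      A ⧸ tjurinaIdeal k A f :=
  extOneEquivOfExactToSpanSingleton (injective_toSpanSingleton_one_tmul_D hf)
      (exact_toSpanSingleton_mapBaseChange hsurj hker)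
      (KaehlerDifferential.mapBaseChange_surjective k P A hsurj) A ≪≫ₗ
    Submodule.quotEquivOfEq _ _ (range_applyₗ_one_tmul_D k A f)

section MvPolynomial

open KaehlerDifferential

section CommSemiring

variable {k σ : Type*} [CommSemiring k]

lemma X_dvd_X_mul_iff {i j : σ} (hij : i ≠ j) {p : MvPolynomial σ k} :
    X i ∣ X j * p ↔ X i ∣ p := by
  refine ⟨fun h ↦ ?_, fun h ↦ h.mul_left _⟩
  rw [X_dvd_iff_modMonomial_eq_zero] at h ⊢
  ext n
  by_cases hn : Finsupp.single i 1 ≤ n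
  · rw [coeff_modMonomial_of_le _ hn, coeff_zero]
  · have hn' : ¬ Finsupp.single i 1 ≤ Finsupp.single j 1 + n := by
      simpa [hij] using hn
    rw [coeff_modMonomial_of_not_le _ hn, ← coeff_X_mul n j p,
      ← coeff_modMonomial_of_not_le _ hn', h, coeff_zero, coeff_zero]

lemma X_mul_dvd_X_mul_iff {i : σ} {p q : MvPolynomial σ k} : X i * p ∣ X i * q ↔ p ∣ q := by
  simp only [dvd_def, mul_assoc, X_mul_cancel_left_iff]

lemma X_mul_X_dvd_iff {i j : σ} (hij : i ≠ j) {p : MvPolynomial σ k} :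
    X i * X j ∣ p ↔ X i ∣ p ∧ X j ∣ p := by
  refine ⟨fun h ↦ ⟨dvd_of_mul_right_dvd h, dvd_of_mul_left_dvd h⟩, ?_⟩
  rintro ⟨hi, q, rfl⟩
  rw [mul_comm, X_mul_dvd_X_mul_iff]
  exact (X_dvd_X_mul_iff hij).1 hi

lemma ker_mvPolynomial_constantCoeff :
    RingHom.ker (constantCoeff (R := k) (σ := σ)) = idealOfVars σ k := by
  ext p
  rw [← pow_one (idealOfVars σ k), mem_pow_idealOfVars_iff']
  simp [constantCoeff, Finsupp.degree_eq_zero_iff]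

end CommSemiring

lemma tjurinaIdeal_mvPolynomial {k σ A : Type*} [CommRing k] [CommRing A] [Algebra k A]
    [Algebra (MvPolynomial σ k) A] [IsScalarTower k (MvPolynomial σ k) A] (f : MvPolynomial σ k) :
    tjurinaIdeal k A f =
      Ideal.span (Set.range fun i ↦ algebraMap (MvPolynomial σ k) A (pderiv i f)) := by
  apply le_antisymm
  · rintro _ ⟨δ, rfl⟩
    change δ f ∈ _
    rw [← Derivation.liftKaehlerDifferential_comp_D,
      ← (mvPolynomialBasis k σ).linearCombination_repr (D k _ f),
      Finsupp.linearCombination_apply, Finsupp.sum, map_sum]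
    refine sum_mem fun i _ ↦ ?_
    rw [map_smul, Algebra.smul_def, mvPolynomialBasis_repr_apply]
    exact Ideal.mul_mem_right _ _ (Ideal.subset_span ⟨i, rfl⟩)
  · rw [Ideal.span_le]
    rintro _ ⟨i, rfl⟩
    exact ⟨(Algebra.linearMap (MvPolynomial σ k) A).compDer (pderiv i), rfl⟩

end MvPolynomial

section Node

/-- The coordinate ring `k[x,y]/(xy)` of the node over an arbitrary base ring `k`. -/
abbrev NodeRingOver (k : Type u) [CommRing k] : Type u :=
  MvPolynomial (Fin 2) k ⧸ Ideal.span {(X 0 * X 1 : MvPolynomial (Fin 2) k)}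

variable (k : Type u) [CommRing k]

lemma tjurinaIdeal_node :
    tjurinaIdeal k (NodeRingOver k) (X 0 * X 1 : MvPolynomial (Fin 2) k) =
      (idealOfVars (Fin 2) k).map (Ideal.Quotient.mk _) := by
  rw [tjurinaIdeal_mvPolynomial, idealOfVars, Ideal.map_span, ← Set.range_comp]
  congr 1
  ext a
  simp [Fin.exists_fin_two, or_comm]

lemma annihilator_tjurinaIdeal_node :
    (tjurinaIdeal k (NodeRingOver k) (X 0 * X 1 : MvPolynomial (Fin 2) k)).annihilator = ⊥ := by
  rw [eq_bot_iff]
  intro a ha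
  obtain ⟨p, rfl⟩ := Ideal.Quotient.mk_surjective a
  have hdvd (i : Fin 2) : X 0 * X 1 ∣ X i * p := by
    have hmem : (Ideal.Quotient.mk _ (X i) : NodeRingOver k) ∈
        tjurinaIdeal k (NodeRingOver k) (X 0 * X 1 : MvPolynomial (Fin 2) k) := by
      rw [tjurinaIdeal_node]
      exact Ideal.mem_map_of_mem _ (Ideal.subset_span ⟨i, rfl⟩)
    rw [← Ideal.Quotient.eq_zero_iff_dvd, mul_comm (X i), map_mul]
    exact Submodule.mem_annihilator.1 ha _ hmem
  have h₀ : X 0 ∣ p := X_mul_dvd_X_mul_iff.1 ((mul_comm (X 1) (X 0)).dvd.trans (hdvd 1))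
  have h₁ : X 1 ∣ p := X_mul_dvd_X_mul_iff.1 (hdvd 0)
  exact (Ideal.Quotient.eq_zero_iff_dvd _ _).2 ((X_mul_X_dvd_iff zero_ne_one).2 ⟨h₀, h₁⟩)

/-- The Tjurina algebra of the node is the base ring, by evaluation at the singular point. -/
noncomputable def quotTjurinaIdealNodeEquiv :
    (NodeRingOver k ⧸ tjurinaIdeal k (NodeRingOver k) (X 0 * X 1 : MvPolynomial (Fin 2) k)) ≃+*
      k :=
  have hle : Ideal.span {(X 0 * X 1 : MvPolynomial (Fin 2) k)} ≤ idealOfVars (Fin 2) k :=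
    (Ideal.span_singleton_le_iff_mem _).2 (Ideal.mul_mem_left _ _ (Ideal.subset_span ⟨1, rfl⟩))
  (Ideal.quotEquivOfEq (tjurinaIdeal_node k)).trans <|
    (DoubleQuot.quotQuotEquivQuotOfLE hle).trans <|
    (Ideal.quotEquivOfEq ker_mvPolynomial_constantCoeff.symm).trans <|
    RingHom.quotientKerEquivOfSurjective fun c ↦ ⟨C c, constantCoeff_C _ c⟩

end Node

theorem node_ext_one_kaehler_iso_complex_general (k : Type u) [CommRing k] :
    Nonempty
      ((((Ext (NodeRingOver k) (ModuleCat (NodeRingOver k)) 1).obj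
            (Opposite.op (ModuleCat.of (NodeRingOver k) (Ω[NodeRingOver k⁄k])))).obj
          (ModuleCat.of (NodeRingOver k) (NodeRingOver k))) ≃+ k) :=
  ⟨(extOneKaehlerEquivQuotTjurinaIdeal (k := k) (P := MvPolynomial (Fin 2) k) (f := X 0 * X 1)
      Ideal.Quotient.mk_surjective Ideal.mk_ker (annihilator_tjurinaIdeal_node k)).toAddEquiv.trans
    (quotTjurinaIdealNodeEquiv k).toAddEquiv⟩

/-- For the node `A = ℂ[x,y]/(xy)`, the first Ext group
`Ext¹_A(Ω[A⁄ℂ], A)` (in the category of `A`-modules) is isomorphic to `ℂ` as an abelian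
group: the node has one-dimensional first-order deformation space `T¹`. -/
theorem node_ext_one_kaehler_iso_complex :
    Nonempty
      ((((Ext NodeRing (ModuleCat NodeRing) 1).obj
            (Opposite.op (ModuleCat.of NodeRing (Ω[NodeRing⁄ℂ])))).obj
          (ModuleCat.of NodeRing NodeRing)) ≃+ ℂ) :=
  node_ext_one_kaehler_iso_complex_general ℂ
end

section
/- Let F = x⁴ + y⁴ + z⁴ ∈ ℂ[x,y,z] be the Fermat quartic. There exist no matrix M : Matrix (Fin 3) (Fin 3) ℂ with trace M = 0 and no scalar λ ∈ ℂ such that Σ_{i,j} M_{ij} x_j ∂F/∂x_i + λ·F = x²y². Hence the monomial x²y² does not lie in the subspace spanned by F and the image of the infinitesimal sl₃-action on F, so the first-order deformation F + ε·x²y² of the plane quartic is nontrivial (not induced by an infinitesimal projective coordinate change and rescaling). -/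
/-!
A polynomial vector field maps the Fermat form `∑ xᵢⁿ⁺¹` into the monomial ideal `(xᵢⁿ)ᵢ`, since
`∂ᵢ` sends it to `(n + 1) xᵢⁿ`; the form itself also lies there. A monomial all of whose exponents
are less than `n` does not, and `x²y²` is such a monomial for `n = 3`.
-/

open MvPolynomial

/-- The Fermat quartic `F = x⁴ + y⁴ + z⁴ ∈ ℂ[x,y,z]`. -/
noncomputable def fermatQuartic : MvPolynomial (Fin 3) ℂ :=
  X 0 ^ 4 + X 1 ^ 4 + X 2 ^ 4

section FermatForm

variable {σ R : Type*} [CommSemiring R]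

variable (σ R) in
/-- The ideal `(xᵢⁿ)ᵢ` generated by the `n`-th powers of the variables. It contains the Jacobian
ideal of the Fermat form `∑ xᵢⁿ⁺¹`, and equals it when `n + 1` is invertible in `R`. -/
noncomputable def idealOfVarPows (n : ℕ) : Ideal (MvPolynomial σ R) :=
  Ideal.span (Set.range fun i ↦ X i ^ n)

theorem X_pow_mem_idealOfVarPows (i : σ) (n : ℕ) : X i ^ n ∈ idealOfVarPows σ R n :=
  Ideal.subset_span ⟨i, rfl⟩

theorem mem_idealOfVarPows_iff {n : ℕ} {p : MvPolynomial σ R} :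
    p ∈ idealOfVarPows σ R n ↔ ∀ m ∈ p.support, ∃ i, n ≤ m i := by
  have span_eq : idealOfVarPows σ R n = Ideal.span
      ((fun s ↦ monomial s (1 : R)) '' Set.range fun i ↦ Finsupp.single i n) := by
    simp only [idealOfVarPows, X_pow_eq_monomial, ← Set.range_comp, Function.comp_def]
  simp only [span_eq, mem_ideal_span_monomial_image, Set.exists_range_iff, Finsupp.single_le_iff]

theorem monomial_mem_idealOfVarPows_iff {n : ℕ} {m : σ →₀ ℕ} {a : R} (ha : a ≠ 0) :
    monomial m a ∈ idealOfVarPows σ R n ↔ ∃ i, n ≤ m i := by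
  classical simp [mem_idealOfVarPows_iff, support_monomial, ha]

variable [Fintype σ]

theorem psum_succ_mem_idealOfVarPows (n : ℕ) : psum σ R (n + 1) ∈ idealOfVarPows σ R n :=
  Ideal.sum_mem _ fun i _ ↦
    Ideal.pow_mem_of_pow_mem _ (X_pow_mem_idealOfVarPows i n) n.le_succ

theorem pderiv_psum_succ (i : σ) (n : ℕ) :
    pderiv i (psum σ R (n + 1)) = (n + 1 : MvPolynomial σ R) * X i ^ n := by
  classical simp [psum, pderiv_X, Pi.single_apply]

theorem fermat_quartic_x2y2_nontrivial_deformation_general {n : ℕ} {m : σ →₀ ℕ}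
    (hm : ∀ i, m i < n) {a : R} (ha : a ≠ 0) (v : σ → MvPolynomial σ R) (g : MvPolynomial σ R) :
    ∑ i, v i * pderiv i (psum σ R (n + 1)) + g * psum σ R (n + 1) ≠ monomial m a := by
  intro h
  have pderiv_mem (i : σ) : pderiv i (psum σ R (n + 1)) ∈ idealOfVarPows σ R n := by
    rw [pderiv_psum_succ]
    exact Ideal.mul_mem_left _ _ (X_pow_mem_idealOfVarPows i n)
  have monomial_mem : monomial m a ∈ idealOfVarPows σ R n := by
    rw [← h]
    exact add_mem (Ideal.sum_mem _ fun i _ ↦ Ideal.mul_mem_left _ _ (pderiv_mem i))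
      (Ideal.mul_mem_left _ _ (psum_succ_mem_idealOfVarPows n))
  obtain ⟨i, hi⟩ := (monomial_mem_idealOfVarPows_iff ha).mp monomial_mem
  exact (hm i).not_ge hi

end FermatForm

theorem fermatQuartic_eq_psum : fermatQuartic = psum (Fin 3) ℂ 4 := by
  simp only [fermatQuartic, psum, Fin.sum_univ_three]

theorem X_pow_mul_X_pow_eq_monomial {σ R : Type*} [CommSemiring R] (i j : σ) (k l : ℕ) :
    (X i ^ k * X j ^ l : MvPolynomial σ R) =
      monomial (Finsupp.single i k + Finsupp.single j l) 1 := by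
  simp only [X_pow_eq_monomial, monomial_mul, mul_one]

/-- There are no traceless matrix `M ∈ sl₃` and scalar `λ ∈ ℂ` with
`δ_M F + λ·F = x²y²` for the Fermat quartic `F = x⁴ + y⁴ + z⁴`: the monomial `x²y²`
does not lie in the span of `F` and the image of the infinitesimal `sl₃`-action, so the
first-order deformation `F + ε·x²y²` is nontrivial. -/
theorem fermat_quartic_x2y2_nontrivial_deformation :
    ¬ ∃ (M : Matrix (Fin 3) (Fin 3) ℂ) (lam : ℂ),
        Matrix.trace M = 0 ∧
        (∑ i : Fin 3, ∑ j : Fin 3, (C (M i j) * X j) * pderiv i fermatQuartic) +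
            C lam * fermatQuartic =
          X 0 ^ 2 * X 1 ^ 2 := by
  rintro ⟨M, lam, -, h⟩
  simp only [← Finset.sum_mul, fermatQuartic_eq_psum, X_pow_mul_X_pow_eq_monomial] at h
  exact fermat_quartic_x2y2_nontrivial_deformation_general (by simp [Fin.forall_fin_succ])
    one_ne_zero _ _ h
end

section
/- Let A = ℂ[x,y]/(xy) be the coordinate ring of the node, and write x̄, ȳ for the classes of the variables. Then for every ℂ-derivation D : A → A (an element of Derivation ℂ A A), one has D(x̄) ∈ Ideal.span {x̄} and D(ȳ) ∈ Ideal.span {ȳ}. Geometrically: every vector field on the node vanishes at the singular point along each of the two branches, so derivations on the node correspond exactly to vector fields on the normalization vanishing at the preimages of the node. -/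
/-!
If `a * b = 0`, multiplying `a * D b + b * D a = D (a * b) = 0` by `b` kills the first term and
leaves `b ^ 2 * D a = 0`. Hence `D a` lies in every prime ideal that does not contain `b`. On the
node, the branch `x̄ = 0` is cut out by a prime ideal that does not contain `ȳ`, and vice versa.
-/

open MvPolynomial

/-- The class `x̄` of the variable `x` in `ℂ[x,y]/(xy)`. -/
noncomputable def nodeX : NodeRing :=
  Ideal.Quotient.mk (Ideal.span {(X 0 * X 1 : MvPolynomial (Fin 2) ℂ)}) (X 0)

/-- The class `ȳ` of the variable `y` in `ℂ[x,y]/(xy)`. -/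
noncomputable def nodeY : NodeRing :=
  Ideal.Quotient.mk (Ideal.span {(X 0 * X 1 : MvPolynomial (Fin 2) ℂ)}) (X 1)

section Derivation

variable {R A : Type*} [CommSemiring R] [CommSemiring A] [Algebra R A]

lemma sq_smul_derivation_eq_zero_of_mul_eq_zero {M : Type*} [AddCommMonoid M] [Module R M]
    [Module A M] (D : Derivation R A M) {a b : A} (hab : a * b = 0) : b ^ 2 • D a = 0 :=
  calc
    b ^ 2 • D a = (a * b) • D b + b ^ 2 • D a := by rw [hab, zero_smul, zero_add]
    _ = b • (a • D b + b • D a) := by rw [smul_add, smul_smul, smul_smul, mul_comm b a, sq]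
    _ = b • D (a * b) := by rw [D.leibniz]
    _ = 0 := by rw [hab, map_zero, smul_zero]

lemma derivation_mem_of_mul_eq_zero_of_notMem (D : Derivation R A A) {P : Ideal A} [P.IsPrime]
    {a b : A} (hab : a * b = 0) (hb : b ∉ P) : D a ∈ P := by
  have hmem : b ^ 2 * D a ∈ P := by
    rw [← smul_eq_mul, sq_smul_derivation_eq_zero_of_mul_eq_zero D hab]
    exact P.zero_mem
  exact (Ideal.IsPrime.mem_or_mem ‹_› hmem).resolve_left
    fun hsq => hb (Ideal.IsPrime.mem_of_pow_mem ‹_› 2 hsq)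

end Derivation

section Quotient

variable {S : Type*} [CommRing S] {I : Ideal S} {p q : S}

lemma isPrime_span_singleton_mk (hp : Prime p) (hI : I ≤ Ideal.span {p}) :
    (Ideal.span {Ideal.Quotient.mk I p}).IsPrime := by
  have : (Ideal.span {p}).IsPrime := (Ideal.span_singleton_prime hp.ne_zero).mpr hp
  rw [← Set.image_singleton, ← Ideal.map_span]
  exact Ideal.map_isPrime_of_surjective Ideal.Quotient.mk_surjective (by rwa [Ideal.mk_ker])

lemma mk_mem_span_singleton_mk_iff_dvd (hI : I ≤ Ideal.span {p}) :
    Ideal.Quotient.mk I q ∈ Ideal.span {Ideal.Quotient.mk I p} ↔ p ∣ q := by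
  rw [← Set.image_singleton, ← Ideal.map_span, Ideal.mem_quotient_iff_mem hI,
    Ideal.mem_span_singleton]

variable {R : Type*} [CommSemiring R] [Algebra R S]

lemma derivation_mk_mem_span_singleton_mk (hp : Prime p) (hpq : ¬p ∣ q)
    (hI : I ≤ Ideal.span {p}) (hmul : p * q ∈ I) (D : Derivation R (S ⧸ I) (S ⧸ I)) :
    D (Ideal.Quotient.mk I p) ∈ Ideal.span {Ideal.Quotient.mk I p} := by
  have : (Ideal.span {Ideal.Quotient.mk I p}).IsPrime := isPrime_span_singleton_mk hp hI
  have hmk : Ideal.Quotient.mk I p * Ideal.Quotient.mk I q = 0 := by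
    rwa [← map_mul, Ideal.Quotient.eq_zero_iff_mem]
  exact derivation_mem_of_mul_eq_zero_of_notMem D hmk
    (mt (mk_mem_span_singleton_mk_iff_dvd hI).mp hpq)

theorem node_derivation_vanishes_along_branches_general (hp : Prime p) (hq : Prime q)
    (hpq : ¬p ∣ q) (hqp : ¬q ∣ p)
    (D : Derivation R (S ⧸ Ideal.span {p * q}) (S ⧸ Ideal.span {p * q})) :
    D (Ideal.Quotient.mk _ p) ∈ Ideal.span {Ideal.Quotient.mk (Ideal.span {p * q}) p} ∧
      D (Ideal.Quotient.mk _ q) ∈ Ideal.span {Ideal.Quotient.mk (Ideal.span {p * q}) q} := by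
  have hmul : p * q ∈ Ideal.span {p * q} := Ideal.mem_span_singleton_self _
  exact ⟨derivation_mk_mem_span_singleton_mk hp hpq
      (Ideal.span_singleton_le_span_singleton.mpr (dvd_mul_right p q)) hmul D,
    derivation_mk_mem_span_singleton_mk hq hqp
      (Ideal.span_singleton_le_span_singleton.mpr (dvd_mul_left q p)) (mul_comm p q ▸ hmul) D⟩

end Quotient

/-- Every `ℂ`-derivation `D : A → A` of the node `A = ℂ[x,y]/(xy)`
satisfies `D(x̄) ∈ (x̄)` and `D(ȳ) ∈ (ȳ)`: every vector field on the node vanishes at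
the singular point along each of the two branches. -/
theorem node_derivation_vanishes_along_branches (D : Derivation ℂ NodeRing NodeRing) :
    D nodeX ∈ Ideal.span {nodeX} ∧ D nodeY ∈ Ideal.span {nodeY} :=
  node_derivation_vanishes_along_branches_general X_prime X_prime (by simp [X_dvd_X])
    (by simp [X_dvd_X]) D
end
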